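/- arXiv:1410.6867 — 2 statements merged into one kernel-verified Lean document; each statement's English description precedes it below -/
import Mathlib

section
/- Let p and q be distinct primes, H a finite abelian p-group, m a positive integer, and G = H ⊕ C_{q^m}. If S is a zero-sum free sequence over G with k(S) = k(G), then every element of S lies in H ⊕ {0} or in {0} ⊕ C_{q^m}; that is, S = S_p · S_q where S_p is a zero-sum free sequence over the p-primary component H ⊕ {0} of G and S_q is a zero-sum free sequence over the q-primary component {0} ⊕ C_{q^m} of G. -/
/-- The cross number `k(S)` of a sequence (finite multiset) `S` over an additive group:
the sum, with multiplicity, of the reciprocals of the orders of its elements. -/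
noncomputable def crossNum {G : Type*} [AddCommGroup G] (S : Multiset G) : ℝ :=
  (S.map fun g => ((addOrderOf g : ℝ))⁻¹).sum

/-- `S` is zero-sum free: no nonempty sub-multiset of `S` has sum `0`. -/
def IsZeroSumFree {G : Type*} [AddCommGroup G] (S : Multiset G) : Prop :=
  ∀ T : Multiset G, T ≤ S → T ≠ 0 → T.sum ≠ 0

/-- The little cross number `k(G)`: the maximal cross number of a zero-sum free
sequence over `G`. -/
noncomputable def littleK (G : Type*) [AddCommGroup G] : ℝ :=
  sSup {x : ℝ | ∃ S : Multiset G, IsZeroSumFree S ∧ crossNum S = x}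


/-- A filtration by ideals attached to a finite family of nilpotent elements. -/
def wIdeal {A : Type*} [CommRing A] {ι : Type} [Fintype ι] (p : ℕ) (n : ι → ℕ) (x : ι → A)
    (w : ℝ) : Ideal A :=
  Ideal.span {a | ∃ k : ι → ℕ, w ≤ ∑ i, (k i : ℝ) / (p : ℝ) ^ n i ∧ a = ∏ i, x i ^ k i}

lemma wIdeal_zero {A : Type*} [CommRing A] {ι : Type} [Fintype ι] (p : ℕ) (n : ι → ℕ)
    (x : ι → A) : wIdeal p n x 0 = ⊤ := by
  rw [Ideal.eq_top_iff_one]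
  exact Ideal.subset_span ⟨fun _ => 0, by simp, by simp⟩

lemma wIdeal_mul {A : Type*} [CommRing A] {ι : Type} [Fintype ι] (p : ℕ) (n : ι → ℕ)
    (x : ι → A) (v w : ℝ) : wIdeal p n x v * wIdeal p n x w ≤ wIdeal p n x (v + w) := by
  unfold wIdeal
  rw [Ideal.span_mul_span, Ideal.span_le]
  rintro _ ⟨_, ⟨k, hk, rfl⟩, _, ⟨l, hl, rfl⟩, rfl⟩
  refine Ideal.subset_span ⟨k + l, ?_, ?_⟩
  · simp only [Pi.add_apply, Nat.cast_add, add_div, Finset.sum_add_distrib]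
    linarith
  · simp [pow_add, Finset.prod_mul_distrib]

lemma wIdeal_anti {A : Type*} [CommRing A] {ι : Type} [Fintype ι] (p : ℕ) (n : ι → ℕ)
    (x : ι → A) (v w : ℝ) (h : v ≤ w) : wIdeal p n x w ≤ wIdeal p n x v := by
  apply Ideal.span_mono
  rintro _ ⟨k, hk, rfl⟩
  exact ⟨k, h.trans hk, rfl⟩

lemma wIdeal_bot {A : Type*} [CommRing A] {ι : Type} [Fintype ι] (p : ℕ) (hp : 0 < p) (n : ι → ℕ)
    (x : ι → A) (hx : ∀ i, x i ^ p ^ n i = 0) (w : ℝ)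
    (hw : ∑ i, (((p ^ n i - 1 : ℕ) : ℝ) * ((p ^ n i : ℕ) : ℝ)⁻¹) < w) : wIdeal p n x w = ⊥ := by
  unfold wIdeal
  rw [Ideal.span_eq_bot]
  rintro _ ⟨k, hk, rfl⟩
  have : ∃ i, p ^ n i ≤ k i := by
    by_contra! hcon
    have : ∑ i, (k i : ℝ) / (p : ℝ) ^ n i ≤
        ∑ i, (((p ^ n i - 1 : ℕ) : ℝ) * ((p ^ n i : ℕ) : ℝ)⁻¹) := by
      apply Finset.sum_le_sum
      intro i _
      rw [div_eq_mul_inv]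
      push_cast
      have := hcon i
      gcongr
      omega
    linarith
  obtain ⟨i, hi⟩ := this
  apply Finset.prod_eq_zero (Finset.mem_univ i)
  rw [← Nat.add_sub_cancel' hi, pow_add, hx, zero_mul]

lemma one_sub_prod_mem {A : Type*} [CommRing A] {ι : Type*} (I : Ideal A) (s : Finset ι)
    (y : ι → A) (h : ∀ i ∈ s, 1 - y i ∈ I) : 1 - ∏ i ∈ s, y i ∈ I := by
  rw [← Ideal.Quotient.eq, map_one, map_prod]
  symm
  apply Finset.prod_eq_one
  intro i hi
  have := h i hi
  rw [← Ideal.Quotient.eq, map_one] at this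
  exact this.symm

lemma sum_basis_coord {ι : Type} [Fintype ι] [DecidableEq ι] (N : ι → ℕ) (hN : ∀ i, 1 < N i)
    (T : Multiset (∀ i, ZMod (N i)))
    (hT : ∀ x ∈ T, ∃ i, x = Pi.single i 1) (i : ι) :
    T.sum i = (T.count (Pi.single i 1) : ZMod (N i)) := by
  induction T using Multiset.induction_on with
  | empty => simp
  | cons a T ih =>
    rw [Multiset.sum_cons, Pi.add_apply, ih (fun x hx => hT x (Multiset.mem_cons_of_mem hx)),
      Multiset.count_cons]
    obtain ⟨k, rfl⟩ := hT a (Multiset.mem_cons_self a T)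
    by_cases hk : k = i
    · subst hk; simp [add_comm]
    · have : (Pi.single i 1 : ∀ i, ZMod (N i)) ≠ Pi.single k 1 := by
        intro h
        have hc := congrFun h i
        have : Fact (1 < N i) := ⟨hN i⟩
        simp [Ne.symm hk] at hc
      rw [if_neg this]
      simp [Ne.symm hk]

lemma basis_zsf {ι : Type} [Fintype ι] [DecidableEq ι] (N : ι → ℕ) (hN : ∀ i, 1 < N i) :
    IsZeroSumFree (∑ i, Multiset.replicate (N i - 1) (Pi.single i 1 : ∀ i, ZMod (N i))) := by
  intro T hT hT0 hsum
  obtain ⟨x, hx⟩ := Multiset.exists_mem_of_ne_zero hT0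
  have hmem : ∀ x ∈ T, ∃ i, x = Pi.single i 1 := by
    intro x hx
    have := Multiset.mem_of_le hT hx
    rw [Multiset.mem_sum] at this
    obtain ⟨i, _, hi⟩ := this
    exact ⟨i, Multiset.eq_of_mem_replicate hi⟩
  obtain ⟨i, rfl⟩ := hmem x hx
  have h1 := sum_basis_coord N hN T hmem i
  rw [hsum, Pi.zero_apply, eq_comm, ZMod.natCast_eq_zero_iff] at h1
  have h2 : 0 < T.count (Pi.single i 1) := Multiset.count_pos.2 hx
  have h3 := Multiset.count_le_of_le (Pi.single i 1) hT
  rw [Multiset.count_sum', Finset.sum_eq_single i] at h3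
  · rw [Multiset.count_replicate_self] at h3
    have := Nat.le_of_dvd h2 h1
    have := hN i
    omega
  · intro k _ hk
    rw [Multiset.count_replicate, if_neg]
    intro h
    have hc := congrFun h i
    have : Fact (1 < N i) := ⟨hN i⟩
    simp [Ne.symm hk] at hc
  · simp

lemma zsf_map {G G' : Type*} [AddCommGroup G] [AddCommGroup G'] (φ : G →+ G')
    (S : Multiset G) (h : IsZeroSumFree (S.map φ)) : IsZeroSumFree S := by
  intro T hT h0 hs
  refine h (T.map φ) (Multiset.map_le_map hT) (by simpa using h0) ?_
  rw [← map_multiset_sum, hs, map_zero]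

lemma crossNum_add {G : Type*} [AddCommGroup G] (S T : Multiset G) :
    crossNum (S + T) = crossNum S + crossNum T := by simp [crossNum]

lemma crossNum_cons {G : Type*} [AddCommGroup G] (g : G) (T : Multiset G) :
    crossNum (g ::ₘ T) = (addOrderOf g : ℝ)⁻¹ + crossNum T := by simp [crossNum]

lemma crossNum_map {G G' : Type*} [AddCommGroup G] [AddCommGroup G'] (φ : G →+ G')
    (hφ : Function.Injective φ)
    (S : Multiset G) : crossNum (S.map φ) = crossNum S := by
  simp [crossNum, addOrderOf_injective φ hφ]

theorem pGroup_facts (p : ℕ) (hp : p.Prime) (H : Type*) [AddCommGroup H] [Finite H]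
    (hH : ∃ n : ℕ, Nat.card H = p ^ n) (A : Type*) [CommRing A] [CharP A p]
    (X : H → A) (hX0 : X 0 = 1) (hX : ∀ a b, X (a + b) = X a * X b) :
    ∃ (κ : ℝ) (J : ℝ → Ideal A) (SH : Multiset H), IsZeroSumFree SH ∧ crossNum SH = κ ∧
      J 0 = ⊤ ∧ (∀ v w, J v * J w ≤ J (v + w)) ∧ (∀ w, κ < w → J w = ⊥) ∧
      ∀ h, 1 - X h ∈ J (addOrderOf h : ℝ)⁻¹ := by
  classical
  have : Fact p.Prime := ⟨hp⟩
  obtain ⟨d, hd⟩ := hH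
  obtain ⟨ι, _, N, hN, ⟨φ0⟩⟩ := AddCommGroup.equiv_directSum_zmod_of_finite' H
  let φ : H ≃+ ∀ i, ZMod (N i) := φ0.trans (DirectSum.addEquivProd _)
  let e : ι → H := fun i => φ.symm (Pi.single i 1)
  have hNe : ∀ i, addOrderOf (e i) = N i := by
    intro i
    have h1 : addOrderOf (φ (e i)) = addOrderOf (e i) :=
      addOrderOf_injective φ.toAddMonoidHom φ.injective _
    rw [← h1]
    simp only [e, AddEquiv.apply_symm_apply]
    have := addOrderOf_injective (AddMonoidHom.single (fun i => ZMod (N i)) i)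
      (fun a b h => Pi.single_injective (M := fun i => ZMod (N i)) i h) 1
    simp only [AddMonoidHom.single_apply] at this
    rw [this, ZMod.addOrderOf_one]
  have hNp : ∀ i, ∃ n, N i = p ^ n := by
    intro i
    have h : N i ∣ p ^ d := by rw [← hNe i, ← hd]; exact addOrderOf_dvd_natCard _
    obtain ⟨n, _, hn⟩ := (Nat.dvd_prime_pow hp).1 h
    exact ⟨n, hn⟩
  choose n hn using hNp
  have hXn : ∀ (c : ℕ) a, X (c • a) = X a ^ c := by
    intro c a
    induction c with
    | zero => simp [hX0]
    | succ c ih => rw [succ_nsmul, hX, ih, pow_succ]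
  have hXs : ∀ (s : Finset ι) (f : ι → H), X (∑ i ∈ s, f i) = ∏ i ∈ s, X (f i) := by
    intro s f
    induction s using Finset.induction_on with
    | empty => simp [hX0]
    | insert a s ha ih => rw [Finset.sum_insert ha, Finset.prod_insert ha, hX, ih]
  let x : ι → A := fun i => 1 - X (e i)
  have hx : ∀ i s, x i ^ p ^ s = 1 - X (e i) ^ p ^ s := by
    intro i s
    simp only [x]
    rw [sub_pow_char_pow, one_pow]
  refine ⟨_, wIdeal p n x, ∑ i, Multiset.replicate (N i - 1) (e i), ?_, rfl, wIdeal_zero _ _ _,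
    wIdeal_mul _ _ _, ?_, ?_⟩
  · apply zsf_map φ.toAddMonoidHom
    have := basis_zsf N hN
    convert this using 1
    rw [← Multiset.coe_mapAddMonoidHom, map_sum]
    simp [e]
  · intro w hw
    apply wIdeal_bot p hp.pos n x
    · intro i
      rw [hx, ← hXn, ← hn i, ← hNe i, addOrderOf_nsmul_eq_zero, hX0, sub_self]
    · convert hw using 1
      have : ∀ s : Finset ι, crossNum (∑ i ∈ s, Multiset.replicate (N i - 1) (e i)) =
          ∑ i ∈ s, crossNum (Multiset.replicate (N i - 1) (e i)) := by
        intro s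
        induction s using Finset.induction_on with
        | empty => simp [crossNum]
        | insert a s ha ih => rw [Finset.sum_insert ha, Finset.sum_insert ha, crossNum_add, ih]
      rw [this]
      apply Finset.sum_congr rfl
      intro i _
      simp only [crossNum, Multiset.map_replicate, Multiset.sum_replicate, nsmul_eq_mul]
      rw [hNe i, hn i]
  · intro h
    obtain ⟨a, _, ha⟩ := (Nat.dvd_prime_pow hp).1 (hd ▸ addOrderOf_dvd_natCard h)
    have : ∀ i, NeZero (N i) := fun i => ⟨by have := hN i; omega⟩
    have hsum : h = ∑ i, (φ h i).val • e i := by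
      apply φ.injective
      rw [map_sum]
      funext i
      rw [Finset.sum_apply, Finset.sum_eq_single i]
      · simp [e]
      · intro k _ hk
        simp [e, Ne.symm hk]
      · simp
    have hXh : X h = ∏ i, X ((φ h i).val • e i) := by
      conv_lhs => rw [hsum]
      rw [hXs]
    rw [hXh]
    apply one_sub_prod_mem
    intro i _
    rw [hXn]
    have hdvd : p ^ (n i - a) ∣ (φ h i).val := by
      have h1 : p ^ a • h = 0 := by rw [← ha]; exact addOrderOf_nsmul_eq_zero h
      have h2 : p ^ a • φ h i = 0 := by
        rw [← Pi.smul_apply, ← map_nsmul, h1]; simp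
      have h3 : N i ∣ p ^ a * (φ h i).val := by
        rw [← ZMod.natCast_eq_zero_iff]
        rw [nsmul_eq_mul] at h2
        rw [Nat.cast_mul, ZMod.natCast_zmod_val, h2]
      replace h3 := (dvd_of_eq (hn i).symm).trans h3
      rcases le_total (n i) a with h4 | h4
      · simp [Nat.sub_eq_zero_of_le h4]
      · rw [← Nat.add_sub_cancel' h4, pow_add] at h3
        exact Nat.dvd_of_mul_dvd_mul_left (pow_pos hp.pos a) h3
    obtain ⟨c, hc⟩ := hdvd
    rw [hc, pow_mul]
    have h5 : x i ^ p ^ (n i - a) ∣ 1 - (X (e i) ^ p ^ (n i - a)) ^ c := by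
      rw [hx]
      simpa using sub_dvd_pow_sub_pow (1 : A) (X (e i) ^ p ^ (n i - a)) c
    refine Ideal.mem_of_dvd _ h5 (Ideal.subset_span ⟨Pi.single i (p ^ (n i - a)), ?_, ?_⟩)
    · rw [Finset.sum_eq_single i]
      · rw [Pi.single_eq_same, ha]
        have hp0 : (0:ℝ) < p := by exact_mod_cast hp.pos
        push_cast
        rw [inv_eq_one_div, div_le_div_iff₀ (by positivity) (by positivity), one_mul, ← pow_add]
        apply pow_le_pow_right₀ (by exact_mod_cast hp.one_le)
        omega
      · intro k _ hk
        simp [hk]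
      · simp
    · rw [Finset.prod_eq_single i]
      · simp
      · intro k _ hk
        simp [hk]
      · simp

/-- `BallSum S f` : `f` is a sum of weighted indicator functions of balls, one for each
term of `S`. -/
inductive BallSum {H : Type*} [AddCommGroup H] {n : ℕ} :
    Multiset (H × ZMod n) → (ZMod n → ℝ) → Prop
  | zero : BallSum 0 (fun _ => 0)
  | cons (S : Multiset (H × ZMod n)) (f : ZMod n → ℝ) (g : H × ZMod n) (r : ZMod n)
      (h : BallSum S f) : BallSum (g ::ₘ S)
        (fun j => f j + if j * g.2 = r * g.2 then (addOrderOf g.1 : ℝ)⁻¹ else 0)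

lemma BallSum.periodic {H : Type*} [AddCommGroup H] {n : ℕ} {S : Multiset (H × ZMod n)}
    {f : ZMod n → ℝ} (h : BallSum S f) (j j' : ZMod n) (ht : ∀ g ∈ S, j * g.2 = j' * g.2) :
    f j = f j' := by
  induction h with
  | zero => rfl
  | cons S f g r h ih =>
    simp only
    rw [ih (fun x hx => ht x (Multiset.mem_cons_of_mem hx)), ht g (Multiset.mem_cons_self _ _)]

lemma card_ball {n : ℕ} [NeZero n] (c r : ZMod n) :
    (((Finset.univ.filter fun j : ZMod n => j * c = r * c).card : ℕ) : ℝ) =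
      n * (addOrderOf c : ℝ)⁻¹ := by
  have h1 : (Finset.univ.filter fun j : ZMod n => j * c = r * c).card =
      Nat.card (AddMonoidHom.mulRight c).ker := by
    rw [← Fintype.card_subtype, ← Nat.card_eq_fintype_card]
    refine Nat.card_congr ⟨fun j => ⟨j.1 - r, ?_⟩, fun t => ⟨t.1 + r, ?_⟩, ?_, ?_⟩
    · have := j.2
      simp [AddMonoidHom.mem_ker, sub_mul, this]
    · have := t.2
      rw [AddMonoidHom.mem_ker] at this
      simp only [AddMonoidHom.coe_mulRight] at this
      simp [add_mul, this]
    · intro j; simp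
    · intro j; simp
  have h2 : (AddMonoidHom.mulRight c).range = AddSubgroup.zmultiples c := by
    ext x
    rw [AddMonoidHom.mem_range, AddSubgroup.mem_zmultiples_iff]
    constructor
    · rintro ⟨y, rfl⟩
      refine ⟨(y.val : ℤ), ?_⟩
      simp
    · rintro ⟨k, rfl⟩
      exact ⟨k, by simp⟩
  have h3 := AddSubgroup.card_mul_index (AddMonoidHom.mulRight c).ker
  rw [AddSubgroup.index_ker, h2, Nat.card_zmultiples, Nat.card_zmod, ← h1] at h3
  have h4 : (addOrderOf c : ℝ) ≠ 0 := by
    have := addOrderOf_pos c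
    positivity
  rw [eq_mul_inv_iff_mul_eq₀ h4]
  exact_mod_cast h3

lemma BallSum.total {H : Type*} [AddCommGroup H] {n : ℕ} [NeZero n]
    (hco : ∀ g : H × ZMod n, addOrderOf g = addOrderOf g.1 * addOrderOf g.2)
    {S : Multiset (H × ZMod n)}
    {f : ZMod n → ℝ} (h : BallSum S f) : ∑ j, f j = n * crossNum S := by
  induction h with
  | zero => simp [crossNum]
  | cons S f g r h ih =>
    rw [Finset.sum_add_distrib, ih, crossNum_cons, ← Finset.sum_filter, Finset.sum_const,
      nsmul_eq_mul, card_ball, hco]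
    push_cast
    rw [mul_inv]
    ring

/-- One greedy step: place the ball of the new term at a minimum of `f`. -/
lemma greedy_step {H : Type*} [AddCommGroup H] [Finite H] {n : ℕ} [NeZero n]
    {S : Multiset (H × ZMod n)} {f : ZMod n → ℝ} (h : BallSum S f)
    (hf : ∀ j j', f j ≤ f j' + 1) (g : H × ZMod n)
    (hg : ∀ s ∈ S, addOrderOf s.2 ∣ addOrderOf g.2) :
    ∃ r, (∀ j, f r ≤ f j) ∧ (∀ j, j * g.2 = r * g.2 → f j = f r) ∧
      ∀ j j', (f j + if j * g.2 = r * g.2 then (addOrderOf g.1 : ℝ)⁻¹ else 0) ≤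
        (f j' + if j' * g.2 = r * g.2 then (addOrderOf g.1 : ℝ)⁻¹ else 0) + 1 := by
  obtain ⟨r, hr⟩ := Finite.exists_min f
  have hper : ∀ j, j * g.2 = r * g.2 → f j = f r := by
    intro j hj
    apply h.periodic
    intro s hs
    have h1 : (j - r) * g.2 = 0 := by rw [sub_mul, hj, sub_self]
    have h2 : (j - r) * s.2 = 0 := by
      have e1 : ∀ c : ZMod n, (j - r) * c = (j - r).val • c := by
        intro c; simp
      rw [e1] at h1 ⊢
      rw [← addOrderOf_dvd_iff_nsmul_eq_zero] at h1 ⊢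
      exact (hg s hs).trans h1
    rwa [sub_mul, sub_eq_zero] at h2
  refine ⟨r, hr, hper, ?_⟩
  intro j j'
  have hw0 : (0 : ℝ) ≤ (addOrderOf g.1 : ℝ)⁻¹ := by positivity
  have hw1 : (addOrderOf g.1 : ℝ)⁻¹ ≤ 1 := by
    apply inv_le_one_of_one_le₀
    exact_mod_cast addOrderOf_pos g.1
  have h1 := hf j j'
  have h2 := hr j'
  split_ifs with h3 h4 h4
  · linarith
  · rw [hper j h3]; linarith
  · linarith
  · linarith

lemma greedy {H : Type*} [AddCommGroup H] [Finite H] {n : ℕ} [NeZero n]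
    (hch : ∀ c d : ZMod n, addOrderOf c ≤ addOrderOf d → addOrderOf c ∣ addOrderOf d)
    {S : Multiset (H × ZMod n)} {f : ZMod n → ℝ} (h : BallSum S f)
    (hf : ∀ j j', f j ≤ f j' + 1) (k : ℕ) : ∀ B : Multiset (H × ZMod n), B.card = k →
    (∀ s ∈ S, ∀ b ∈ B, addOrderOf s.2 ∣ addOrderOf b.2) →
    ∃ f', BallSum (B + S) f' ∧ (∀ j j', f' j ≤ f' j' + 1) ∧
      ((∀ b ∈ B, b.1 = 0) → ∀ j, ∃ N : ℕ, f' j = f j + N) := by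
  induction k with
  | zero =>
    intro B hB _
    rw [Multiset.card_eq_zero] at hB
    subst hB
    exact ⟨f, by simpa using h, hf, fun _ j => ⟨0, by simp⟩⟩
  | succ k ih =>
    intro B hB hSB
    have hB0 : B ≠ 0 := by rintro rfl; simp at hB
    have : ∃ g ∈ B, ∀ b ∈ B, addOrderOf b.2 ≤ addOrderOf g.2 := by
      classical
      obtain ⟨x, hx⟩ := Multiset.exists_mem_of_ne_zero hB0
      obtain ⟨g, hg, hmax⟩ := Finset.exists_max_image B.toFinset (fun b => addOrderOf b.2)
        ⟨x, by simpa using hx⟩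
      exact ⟨g, by simpa using hg, fun b hb => hmax b (by simpa using hb)⟩
    obtain ⟨g, hg, hmax⟩ := this
    obtain ⟨B', rfl⟩ := Multiset.exists_cons_of_mem hg
    obtain ⟨f', hf'1, hf'2, hf'3⟩ := ih B' (by simpa using hB)
      (fun s hs b hb => hSB s hs b (Multiset.mem_cons_of_mem hb))
    obtain ⟨r, _, _, hr⟩ := greedy_step hf'1 hf'2 g (by
      intro s hs
      rcases Multiset.mem_add.1 hs with hs | hs
      · exact hch _ _ (hmax s (Multiset.mem_cons_of_mem hs))
      · exact hSB s hs g hg)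
    refine ⟨_, ?_, hr, ?_⟩
    · rw [Multiset.cons_add]
      exact BallSum.cons _ _ g r hf'1
    · intro hb j
      obtain ⟨N, hN⟩ := hf'3 (fun b hb' => hb b (Multiset.mem_cons_of_mem hb')) j
      rw [hN, hb g hg]
      split_ifs
      · exact ⟨N + 1, by simp; ring⟩
      · exact ⟨N, by simp⟩

open AddMonoidAlgebra in
lemma coeff_subset_sum {F G : Type*} [Field F] [AddCommGroup G] (L : Multiset (F × G)) :
    ∀ x, ((L.map fun a : F × G => (1 : AddMonoidAlgebra F G) - single a.2 a.1).prod).coeff x ≠ 0 →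
      ∃ T ≤ L.map Prod.snd, T.sum = x := by
  induction L using Multiset.induction_on with
  | empty =>
    intro x hx
    refine ⟨0, by simp, ?_⟩
    by_contra h
    apply hx
    have h' : 0 ≠ x := by simpa using h
    simp [one_def, h']
  | cons a L ih =>
    intro x hx
    rw [Multiset.map_cons, Multiset.prod_cons, sub_mul, one_mul, coeff_sub, Finsupp.sub_apply,
      coeff_single_mul_apply] at hx
    set P := (L.map fun a : F × G => (1 : AddMonoidAlgebra F G) - single a.2 a.1).prod
    by_cases h1 : P.coeff x = 0
    · have h2 : P.coeff (-a.2 + x) ≠ 0 := by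
        intro h2; apply hx; simp [h1, h2]
      obtain ⟨T, hT, hs⟩ := ih _ h2
      refine ⟨a.2 ::ₘ T, ?_, ?_⟩
      · rw [Multiset.map_cons]; exact Multiset.cons_le_cons _ hT
      · rw [Multiset.sum_cons, hs]; abel
    · obtain ⟨T, hT, hs⟩ := ih _ h1
      exact ⟨T, hT.trans (by rw [Multiset.map_cons]; exact Multiset.le_cons_self _ _), hs⟩

lemma IsZeroSumFree.mono {G : Type*} [AddCommGroup G] {S T : Multiset G} (h : IsZeroSumFree S)
    (hT : T ≤ S) : IsZeroSumFree T := fun U hU => h U (hU.trans hT)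

open AddMonoidAlgebra in
lemma coeff_zero_of_zsf {F G : Type*} [Field F] [AddCommGroup G] (L : Multiset (F × G))
    (h : IsZeroSumFree (L.map Prod.snd)) :
    ((L.map fun a : F × G => (1 : AddMonoidAlgebra F G) - single a.2 a.1).prod).coeff 0 = 1 := by
  induction L using Multiset.induction_on with
  | empty => simp [one_def]
  | cons a L ih =>
    rw [Multiset.map_cons, Multiset.prod_cons, sub_mul, one_mul, coeff_sub, Finsupp.sub_apply,
      coeff_single_mul_apply]
    rw [Multiset.map_cons] at h
    rw [ih (h.mono (Multiset.le_cons_self _ _))]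
    have h2 : ((L.map fun a : F × G => (1 : AddMonoidAlgebra F G) - single a.2 a.1).prod).coeff
        (-a.2 + 0) = 0 := by
      by_contra h2
      obtain ⟨T, hT, hs⟩ := coeff_subset_sum L _ h2
      refine h (a.2 ::ₘ T) (Multiset.cons_le_cons _ hT) (Multiset.cons_ne_zero) ?_
      rw [Multiset.sum_cons, hs]; abel
    rw [h2]
    simp

open AddMonoidAlgebra in
/-- The specialization of the group algebra of `H × ZMod n` at a character. -/
noncomputable def chiHom {F H : Type*} [Field F] [AddCommGroup H] {n : ℕ}
    (ψ : AddChar (ZMod n) F) (j : ZMod n) :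
    AddMonoidAlgebra F (H × ZMod n) →ₐ[F] AddMonoidAlgebra F H :=
  AddMonoidAlgebra.lift F (AddMonoidAlgebra F H) (H × ZMod n)
    { toFun := fun g => single (Multiplicative.toAdd g).1 (ψ (j * (Multiplicative.toAdd g).2))
      map_one' := by simp [one_def]
      map_mul' := by
        intro a b
        simp [mul_add, AddChar.map_add_eq_mul, single_mul_single] }

open AddMonoidAlgebra in
lemma chiHom_single {F H : Type*} [Field F] [AddCommGroup H] {n : ℕ}
    (ψ : AddChar (ZMod n) F) (j : ZMod n) (g : H × ZMod n) (a : F) :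
    chiHom ψ j (single g a) = single g.1 (a * ψ (j * g.2)) := by
  simp [chiHom]

open AddMonoidAlgebra in
lemma sum_chiHom {F H : Type*} [Field F] [AddCommGroup H] {n : ℕ} [NeZero n]
    (ψ : AddChar (ZMod n) F) (hψ : ψ.IsPrimitive) (P : AddMonoidAlgebra F (H × ZMod n)) :
    ∑ j, (chiHom ψ j P).coeff 0 = (n : F) * P.coeff 0 := by
  classical
  induction P using AddMonoidAlgebra.induction_linear with
  | zero => simp
  | add x y hx hy => simp [Finset.sum_add_distrib, hx, hy, mul_add]
  | single g a =>
    simp only [chiHom_single, coeff_single, Finsupp.single_apply]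
    by_cases h : g.1 = 0
    · simp only [h, if_true, ← Finset.mul_sum, AddChar.sum_mulShift _ hψ, Prod.ext_iff,
        Prod.fst_zero, Prod.snd_zero, true_and, ZMod.card]
      split_ifs
      · ring
      · simp
    · have : g ≠ 0 := by rintro rfl; exact h rfl
      simp [h, this]

open AddMonoidAlgebra in
/-- Key algebraic bound. -/
lemma BallSum.exists_le {F H : Type*} [Field F] [AddCommGroup H] {n : ℕ} [NeZero n]
    (ψ : AddChar (ZMod n) F) (hψ : ψ.IsPrimitive) (hn : (n : F) ≠ 0)
    (κ : ℝ) (J : ℝ → Ideal (AddMonoidAlgebra F H)) (hJ0 : J 0 = ⊤)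
    (hJm : ∀ v w, J v * J w ≤ J (v + w)) (hJb : ∀ w, κ < w → J w = ⊥)
    (hJX : ∀ h : H, 1 - (single h 1 : AddMonoidAlgebra F H) ∈ J (addOrderOf h : ℝ)⁻¹)
    {S : Multiset (H × ZMod n)} {f : ZMod n → ℝ} (h : BallSum S f) (hS : IsZeroSumFree S) :
    ∃ j, f j ≤ κ := by
  have key : ∃ L : Multiset (F × (H × ZMod n)), L.map Prod.snd = S ∧
      ∀ j, chiHom ψ j (L.map fun a : F × (H × ZMod n) => (1 : AddMonoidAlgebra F _) - single a.2 a.1).prod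
        ∈ J (f j) := by
    clear hS
    induction h with
    | zero => exact ⟨0, by simp, fun j => by simp [hJ0]⟩
    | cons S f g r h ih =>
      obtain ⟨L, hL, hj⟩ := ih
      refine ⟨((ψ (r * g.2))⁻¹, g) ::ₘ L, by simp [hL], ?_⟩
      intro j
      rw [Multiset.map_cons, Multiset.prod_cons, map_mul, mul_comm (chiHom ψ j _)]
      refine hJm _ _ (Ideal.mul_mem_mul (hj j) ?_)
      split_ifs with hjr
      · rw [map_sub, map_one, chiHom_single, hjr, inv_mul_cancel₀ (ψ.val_isUnit _).ne_zero]
        exact hJX _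
      · rw [hJ0]; trivial
  obtain ⟨L, rfl, hL⟩ := key
  by_contra! hcon
  have h1 := sum_chiHom ψ hψ (L.map fun a : F × (H × ZMod n) => (1 : AddMonoidAlgebra F _) - single a.2 a.1).prod
  rw [coeff_zero_of_zsf L hS, Finset.sum_eq_zero] at h1
  · apply hn; simpa using h1.symm
  · intro j _
    have := hL j
    rw [hJb _ (hcon j), Ideal.mem_bot] at this
    rw [this]; rfl

lemma sum_fst_eq_zero {A B : Type*} [AddCommGroup A] [AddCommGroup B] (T : Multiset (A × B))
    (h : ∀ x ∈ T, x.1 = 0) : T.sum.1 = 0 := by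
  induction T using Multiset.induction_on with
  | empty => simp
  | cons a T ih =>
    rw [Multiset.sum_cons, Prod.fst_add, h a (Multiset.mem_cons_self _ _),
      ih (fun x hx => h x (Multiset.mem_cons_of_mem hx)), add_zero]

lemma sum_snd_eq_zero {A B : Type*} [AddCommGroup A] [AddCommGroup B] (T : Multiset (A × B))
    (h : ∀ x ∈ T, x.2 = 0) : T.sum.2 = 0 := by
  induction T using Multiset.induction_on with
  | empty => simp
  | cons a T ih =>
    rw [Multiset.sum_cons, Prod.snd_add, h a (Multiset.mem_cons_self _ _),
      ih (fun x hx => h x (Multiset.mem_cons_of_mem hx)), add_zero]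

lemma exists_split_of_le_add {α : Type*} {T A B : Multiset α} (h : T ≤ A + B) :
    ∃ T1 T2, T1 ≤ A ∧ T2 ≤ B ∧ T = T1 + T2 := by
  classical
  refine ⟨T ∩ A, T - A, Multiset.inter_le_right, ?_, ?_⟩
  · exact tsub_le_iff_left.2 h
  · rw [add_comm, Multiset.sub_add_inter]

lemma exists_split_of_le_cons {α : Type*} {T A : Multiset α} {a : α} (h : T ≤ a ::ₘ A) :
    T ≤ A ∨ ∃ T' ≤ A, T = a ::ₘ T' := by
  by_cases ha : a ∈ T
  · obtain ⟨T', rfl⟩ := Multiset.exists_cons_of_mem ha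
    exact Or.inr ⟨T', (Multiset.cons_le_cons_iff a).1 h, rfl⟩
  · exact Or.inl ((Multiset.le_cons_of_notMem ha).1 h)

lemma zsf_add {A B : Type*} [AddCommGroup A] [AddCommGroup B] {S T : Multiset (A × B)}
    (hS : IsZeroSumFree S) (hT : IsZeroSumFree T) (hS2 : ∀ x ∈ S, x.2 = 0)
    (hT1 : ∀ x ∈ T, x.1 = 0) : IsZeroSumFree (S + T) := by
  intro U hU hU0 hs
  obtain ⟨U1, U2, h1, h2, rfl⟩ := exists_split_of_le_add hU
  have e1 := sum_snd_eq_zero U1 (fun x hx => hS2 x (Multiset.mem_of_le h1 hx))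
  have e2 := sum_fst_eq_zero U2 (fun x hx => hT1 x (Multiset.mem_of_le h2 hx))
  rw [Multiset.sum_add, Prod.ext_iff, Prod.fst_add, Prod.snd_add, e1, e2] at hs
  simp only [add_zero, zero_add, Prod.fst_zero, Prod.snd_zero] at hs
  have z1 : U1 = 0 := by
    by_contra h
    exact hS U1 h1 h (Prod.ext hs.1 e1)
  have z2 : U2 = 0 := by
    by_contra h
    exact hT U2 h2 h (Prod.ext e2 hs.2)
  exact hU0 (by simp [z1, z2])

lemma zsf_replicate {H : Type*} [AddCommGroup H] {n : ℕ} (hn : 0 < n) :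
    IsZeroSumFree (Multiset.replicate (n - 1) ((0, 1) : H × ZMod n)) := by
  intro T hT h0 hs
  obtain ⟨k, hk, rfl⟩ := Multiset.le_replicate_iff.1 hT
  rw [Multiset.sum_replicate, Prod.ext_iff] at hs
  have h2 := hs.2
  simp only [Prod.smul_snd, nsmul_eq_mul, mul_one, Prod.snd_zero] at h2
  rw [ZMod.natCast_eq_zero_iff] at h2
  have hk0 : k ≠ 0 := by rintro rfl; exact h0 (by simp)
  have := Nat.le_of_dvd (Nat.pos_of_ne_zero hk0) h2
  omega

/-- Analysis of the extremal configuration, assuming the algebraic bound `hle`. -/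
theorem no_mixed {H : Type*} [AddCommGroup H] [Finite H] {n : ℕ} [NeZero n] (κ : ℝ)
    (hco : ∀ g : H × ZMod n, addOrderOf g = addOrderOf g.1 * addOrderOf g.2)
    (hch : ∀ c d : ZMod n, addOrderOf c ≤ addOrderOf d → addOrderOf c ∣ addOrderOf d)
    (SH : Multiset H) (hSH : IsZeroSumFree SH) (hκ : crossNum SH = κ)
    (hle : ∀ (S : Multiset (H × ZMod n)) (f : ZMod n → ℝ), BallSum S f → IsZeroSumFree S →
      ∃ j, f j ≤ κ)
    (S : Multiset (H × ZMod n)) (hS : IsZeroSumFree S)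
    (hmax : crossNum S = littleK (H × ZMod n)) :
    ∀ g ∈ S, g.2 = 0 ∨ g.1 = 0 := by
  classical
  have hn0 : (0 : ℝ) < n := by exact_mod_cast NeZero.pos n
  have hsum1 : ∀ (f : ZMod n → ℝ) (j0 : ZMod n),
      ∑ j ∈ Finset.univ.erase j0, (f j0 + 1 - f j) = n * f j0 + (n - 1) - ∑ j, f j := by
    intro f j0
    rw [Finset.sum_sub_distrib, Finset.sum_const, Finset.card_erase_of_mem (Finset.mem_univ _),
      Finset.card_univ, ZMod.card, nsmul_eq_mul, Nat.cast_sub (NeZero.one_le),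
      ← Finset.add_sum_erase _ f (Finset.mem_univ j0)]
    push_cast
    ring
  have hstart : ∀ B : Multiset (H × ZMod n),
      ∃ f', BallSum B f' ∧ (∀ j j', f' j ≤ f' j' + 1) := by
    intro B
    obtain ⟨f, h1, h2, _⟩ := greedy hch (BallSum.zero (H := H) (n := n)) (by simp) _ B rfl (by simp)
    exact ⟨f, by simpa using h1, h2⟩
  have hub : ∀ S : Multiset (H × ZMod n), IsZeroSumFree S → n * crossNum S ≤ n * κ + (n - 1) := by
    intro S hS
    obtain ⟨f, h1, h2⟩ := hstart S
    obtain ⟨j0, hj0⟩ := hle S f h1 hS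
    have h3 := hsum1 f j0
    have h4 : 0 ≤ ∑ j ∈ Finset.univ.erase j0, (f j0 + 1 - f j) :=
      Finset.sum_nonneg (fun j _ => by linarith [h2 j j0])
    rw [h1.total hco] at h3
    have : n * f j0 ≤ n * κ := by gcongr
    linarith
  -- the sequence `SH` inside the product
  set SH' : Multiset (H × ZMod n) := SH.map (AddMonoidHom.inl H (ZMod n)) with hSH'
  have hSH'z : IsZeroSumFree SH' := by
    apply zsf_map (AddMonoidHom.fst H (ZMod n))
    rw [hSH', Multiset.map_map]
    simpa [Function.comp_def] using hSH
  have hSH'c : crossNum SH' = κ := by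
    rw [hSH', crossNum_map _ (fun a b h => by simpa using h), hκ]
  have hSH'2 : ∀ x ∈ SH', x.2 = 0 := by
    intro x hx
    obtain ⟨y, _, rfl⟩ := Multiset.mem_map.1 hx
    rfl
  have hlow : n * κ + (n - 1) ≤ n * crossNum S := by
    have hz := zsf_add hSH'z (zsf_replicate (H := H) (NeZero.pos n)) hSH'2
      (fun x hx => by rw [Multiset.eq_of_mem_replicate hx])
    have hc : n * crossNum (SH' + Multiset.replicate (n - 1) ((0, 1) : H × ZMod n)) =
        n * κ + (n - 1) := by
      rw [crossNum_add, hSH'c, crossNum]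
      rw [Multiset.map_replicate, Multiset.sum_replicate, hco]
      simp only [addOrderOf_zero, ZMod.addOrderOf_one, one_mul, nsmul_eq_mul]
      rw [Nat.cast_sub (NeZero.one_le)]
      field_simp
      simp
    rw [← hc, hmax]
    gcongr
    apply le_csSup
    · refine ⟨κ + (n - 1) / n, ?_⟩
      rintro _ ⟨T, hT, rfl⟩
      have := hub T hT
      rw [← mul_le_mul_iff_right₀ hn0]
      refine this.trans (le_of_eq ?_)
      field_simp
    · exact ⟨_, hz, rfl⟩
  by_contra! hcon
  obtain ⟨g0, hg0S, hg02, hg01⟩ := hcon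
  obtain ⟨g, hg, hgmax⟩ := Finset.exists_max_image
    (S.toFinset.filter fun g => g.2 ≠ 0 ∧ g.1 ≠ 0) (fun b => addOrderOf b.2)
    ⟨g0, by simp [hg0S, hg02, hg01]⟩
  simp only [Finset.mem_filter, Multiset.mem_toFinset] at hg hgmax
  obtain ⟨hgS, hg2, hg1⟩ := hg
  obtain ⟨S', rfl⟩ := Multiset.exists_cons_of_mem hgS
  set B := S'.filter (fun x => addOrderOf g.2 < addOrderOf x.2) with hBdef
  set A := S'.filter (fun x => ¬ addOrderOf g.2 < addOrderOf x.2) with hAdef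
  have hBA : B + A = S' := Multiset.filter_add_not _ _
  have hB1 : ∀ x ∈ B, x.1 = 0 := by
    intro x hx
    rw [hBdef, Multiset.mem_filter] at hx
    by_contra h1
    have h2 : x.2 ≠ 0 := by
      intro h2
      rw [h2, addOrderOf_zero] at hx
      have := addOrderOf_pos g.2
      omega
    have := hgmax x ⟨Multiset.mem_cons_of_mem hx.1, h2, h1⟩
    omega
  have hAg : ∀ s ∈ A, addOrderOf s.2 ∣ addOrderOf g.2 := by
    intro x hx
    rw [hAdef, Multiset.mem_filter] at hx
    exact hch _ _ (not_lt.1 hx.2)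
  obtain ⟨f1, hf1, hs1⟩ := hstart A
  obtain ⟨r, hr, hper, hs2⟩ := greedy_step hf1 hs1 g hAg
  have hf2 := BallSum.cons A f1 g r hf1
  set f2 : ZMod n → ℝ :=
    fun j => f1 j + if j * g.2 = r * g.2 then (addOrderOf g.1 : ℝ)⁻¹ else 0 with hf2def
  obtain ⟨f3, hf3, hs3, hnatdiff⟩ := greedy hch hf2 hs2 _ B rfl (by
    intro s hs b hb
    have hb' : addOrderOf g.2 ∣ addOrderOf b.2 := by
      rw [hBdef, Multiset.mem_filter] at hb
      exact hch _ _ hb.2.le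
    rcases Multiset.mem_cons.1 hs with rfl | hs
    · exact hb'
    · exact (hAg s hs).trans hb')
  replace hnatdiff := hnatdiff hB1
  have hSe : B + g ::ₘ A = g ::ₘ S' := by rw [Multiset.add_cons, hBA]
  obtain ⟨j0, hj0⟩ := hle _ f3 hf3 (by rw [hSe]; exact hS)
  have hval : ∀ j, ∃ N : ℕ, f3 j = f3 j0 + N := by
    have h3 := hsum1 f3 j0
    rw [hf3.total hco, hSe] at h3
    have h5 : n * f3 j0 ≤ n * κ := by gcongr
    have h4 : ∀ j ∈ Finset.univ.erase j0, 0 ≤ f3 j0 + 1 - f3 j :=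
      fun j _ => by linarith [hs3 j j0]
    have h6 := (Finset.sum_eq_zero_iff_of_nonneg h4).1
      (le_antisymm (by linarith) (Finset.sum_nonneg h4))
    intro j
    by_cases hj : j = j0
    · exact ⟨0, by simp [hj]⟩
    · refine ⟨1, ?_⟩
      have := h6 j (by simp [hj])
      push_cast
      linarith
  have hw0 : 0 < (addOrderOf g.1 : ℝ)⁻¹ := by
    have := addOrderOf_pos g.1
    positivity
  have hw1 : (addOrderOf g.1 : ℝ)⁻¹ < 1 := by
    apply inv_lt_one_of_one_lt₀
    have h1 := addOrderOf_pos g.1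
    have h2 : addOrderOf g.1 ≠ 1 := by rwa [Ne, AddMonoid.addOrderOf_eq_one_iff]
    have : 1 < addOrderOf g.1 := by omega
    exact_mod_cast this
  have hconst : ∀ j, f2 j = f1 r + (addOrderOf g.1 : ℝ)⁻¹ := by
    intro j
    by_cases hj : j * g.2 = r * g.2
    · simp only [hf2def, hj, if_true, hper j hj]
    · have e2 : f2 j = f1 j := by simp only [hf2def, hj, if_false, add_zero]
      have e2r : f2 r = f1 r + (addOrderOf g.1 : ℝ)⁻¹ := by simp only [hf2def, if_true]
      obtain ⟨a, ha⟩ := hnatdiff j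
      obtain ⟨b, hb⟩ := hnatdiff r
      obtain ⟨c, hc⟩ := hval j
      obtain ⟨d, hd⟩ := hval r
      have hz : f2 j - (f1 r + (addOrderOf g.1 : ℝ)⁻¹) = ((c - d - a + b : ℤ) : ℝ) := by
        push_cast
        linarith
      have l1 := hr j
      have l2 := hs1 j r
      have l3 : (-1 : ℝ) < ((c - d - a + b : ℤ) : ℝ) := by rw [← hz, e2]; linarith
      have l4 : ((c - d - a + b : ℤ) : ℝ) < 1 := by rw [← hz, e2]; linarith
      have l5 : (c - d - a + b : ℤ) = 0 := by
        have l3' : (-1 : ℤ) < (c - d - a + b : ℤ) := by exact_mod_cast l3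
        have l4' : (c - d - a + b : ℤ) < 1 := by exact_mod_cast l4
        omega
      rw [l5] at hz
      push_cast at hz
      linarith
  have hgA : n * crossNum (g ::ₘ A) ≤ n * κ := by
    have h1 := hf2.total hco
    have h2 : ∑ j, f2 j = n * (f1 r + (addOrderOf g.1 : ℝ)⁻¹) := by
      rw [Finset.sum_congr rfl (fun j _ => hconst j), Finset.sum_const, Finset.card_univ,
        ZMod.card, nsmul_eq_mul]
    rw [← h1]
    change ∑ j, f2 j ≤ _
    rw [h2]
    gcongr
    obtain ⟨N, hN⟩ := hnatdiff j0
    rw [hconst] at hN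
    have : (0 : ℝ) ≤ N := by positivity
    linarith
  have hBc : (n : ℝ) - 1 ≤ n * crossNum B := by
    rw [← hSe, crossNum_add, mul_add] at hlow
    linarith
  have hSz := hS
  rw [← hSe] at hSz
  have hcover : ∀ c : ZMod n, ∃ E ≤ B, E.sum = (0, c) := by
    intro c
    by_contra! hE
    have hz : IsZeroSumFree ((0, -c) ::ₘ B) := by
      intro T hT hT0 hs
      rcases exists_split_of_le_cons hT with h | ⟨T', hT', rfl⟩
      · exact hSz T (h.trans (Multiset.le_add_right _ _)) hT0 hs
      · apply hE T' hT'
        rw [Multiset.sum_cons, add_comm, add_eq_zero_iff_eq_neg] at hs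
        rw [hs]
        simp
    have hz2 := zsf_add hSH'z hz hSH'2 (by
      intro x hx
      rcases Multiset.mem_cons.1 hx with rfl | hx
      · rfl
      · exact hB1 x hx)
    have h1 := hub _ hz2
    rw [crossNum_add, crossNum_cons, hSH'c, mul_add, mul_add, hco] at h1
    simp only [addOrderOf_zero, one_mul] at h1
    have h2 : (0 : ℝ) < n * (addOrderOf (-c) : ℝ)⁻¹ := by
      have := addOrderOf_pos (-c)
      positivity
    linarith
  have hrep : IsZeroSumFree ((g.1, 0) ::ₘ (B + A)) := by
    intro T hT hT0 hs
    rcases exists_split_of_le_cons hT with h | ⟨T', hT', rfl⟩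
    · refine hS T (h.trans ?_) hT0 hs
      rw [hBA]
      exact Multiset.le_cons_self _ _
    · obtain ⟨T2, T1, h2, h1, rfl⟩ := exists_split_of_le_add hT'
      have e2 := sum_fst_eq_zero T2 (fun x hx => hB1 x (Multiset.mem_of_le h2 hx))
      obtain ⟨E, hE, hEs⟩ := hcover (T2.sum.2 - g.2)
      refine hSz (E + g ::ₘ T1) (add_le_add hE (Multiset.cons_le_cons _ h1)) (by simp) ?_
      rw [Multiset.sum_add, hEs, Multiset.sum_cons, ← hs, Multiset.sum_cons, Multiset.sum_add]
      ext
      · simp [e2]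
      · simp only [Prod.snd_add]; abel
  have h1 := hub _ hrep
  rw [crossNum_cons, hco, hBA] at h1
  rw [crossNum_cons, hco] at hlow
  simp only [addOrderOf_zero, mul_one] at h1
  push_cast at hlow
  rw [mul_inv] at hlow
  have h2 : (addOrderOf g.2 : ℝ)⁻¹ < 1 := by
    apply inv_lt_one_of_one_lt₀
    have h1 := addOrderOf_pos g.2
    have h2 : addOrderOf g.2 ≠ 1 := by rwa [Ne, AddMonoid.addOrderOf_eq_one_iff]
    have : 1 < addOrderOf g.2 := by omega
    exact_mod_cast this
  have h3 : (addOrderOf g.1 : ℝ)⁻¹ * (addOrderOf g.2 : ℝ)⁻¹ < (addOrderOf g.1 : ℝ)⁻¹ :=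
    mul_lt_of_lt_one_right hw0 h2
  have h4 := mul_lt_mul_of_pos_left h3 hn0
  linarith

/-- For distinct primes `p, q`, a finite abelian `p`-group `H`, `m ≥ 1` and
`G = H ⊕ C_{q^m}`: every zero-sum free sequence `S` over `G` with `k(S) = k(G)`
splits as `S = Sp + Sq` with `Sp` a zero-sum free sequence over `H ⊕ {0}` and
`Sq` a zero-sum free sequence over `{0} ⊕ C_{q^m}`. -/
theorem maximal_zero_sum_free_splits_pGroup_prod_zmod
    (p q : ℕ) (hp : p.Prime) (hq : q.Prime) (hpq : p ≠ q)
    (H : Type*) [AddCommGroup H] [Finite H] (hH : ∃ n : ℕ, Nat.card H = p ^ n)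
    (m : ℕ) (hm : 0 < m)
    (S : Multiset (H × ZMod (q ^ m))) (hS : IsZeroSumFree S)
    (hmax : crossNum S = littleK (H × ZMod (q ^ m))) :
    ∃ Sp Sq : Multiset (H × ZMod (q ^ m)),
      S = Sp + Sq ∧ (∀ x ∈ Sp, x.2 = 0) ∧ (∀ x ∈ Sq, x.1 = 0) ∧
        IsZeroSumFree Sp ∧ IsZeroSumFree Sq := by
  classical
  have hpf : Fact p.Prime := ⟨hp⟩
  have hne : NeZero (q ^ m) := ⟨pow_ne_zero _ hq.ne_zero⟩
  have hqm : ((q ^ m : ℕ) : AlgebraicClosure (ZMod p)) ≠ 0 := by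
    rw [Ne, CharP.cast_eq_zero_iff _ p]
    intro h
    exact hpq ((Nat.prime_dvd_prime_iff_eq hp hq).1 (hp.dvd_of_dvd_pow h))
  have hne' : NeZero ((q ^ m : ℕ) : AlgebraicClosure (ZMod p)) := ⟨hqm⟩
  obtain ⟨ζ, hζ⟩ := HasEnoughRootsOfUnity.exists_primitiveRoot (AlgebraicClosure (ZMod p)) (q ^ m)
  have hψ := AddChar.zmodChar_primitive_of_primitive_root (q ^ m) hζ
  have hchar : CharP (AddMonoidAlgebra (AlgebraicClosure (ZMod p)) H) p :=
    charP_of_injective_algebraMap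
      (algebraMap (AlgebraicClosure (ZMod p)) (AddMonoidAlgebra _ H)).injective p
  obtain ⟨κ, J, SH, hSH, hκ, hJ0, hJm, hJb, hJX⟩ := pGroup_facts p hp H hH
    (AddMonoidAlgebra (AlgebraicClosure (ZMod p)) H) (fun h => AddMonoidAlgebra.single h 1)
    rfl (fun a b => by simp [AddMonoidAlgebra.single_mul_single])
  have hord : ∀ c : ZMod (q ^ m), addOrderOf c ∣ q ^ m := by
    intro c
    have := addOrderOf_dvd_natCard c
    rwa [Nat.card_zmod] at this
  have hco : ∀ g : H × ZMod (q ^ m), addOrderOf g = addOrderOf g.1 * addOrderOf g.2 := by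
    intro g
    rw [Prod.addOrderOf]
    apply Nat.Coprime.lcm_eq_mul
    obtain ⟨d, hd⟩ := hH
    have h1 : addOrderOf g.1 ∣ p ^ d := hd ▸ addOrderOf_dvd_natCard g.1
    exact Nat.Coprime.coprime_dvd_left h1 (Nat.Coprime.coprime_dvd_right (hord g.2)
      (Nat.coprime_pow_primes _ _ hp hq hpq))
  have hch : ∀ c d : ZMod (q ^ m), addOrderOf c ≤ addOrderOf d → addOrderOf c ∣ addOrderOf d := by
    intro c d h
    obtain ⟨a, _, ha⟩ := (Nat.dvd_prime_pow hq).1 (hord c)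
    obtain ⟨b, _, hb⟩ := (Nat.dvd_prime_pow hq).1 (hord d)
    rw [ha, hb] at h ⊢
    exact pow_dvd_pow q ((Nat.pow_le_pow_iff_right hq.one_lt).1 h)
  have hno := no_mixed κ hco hch SH hSH hκ
    (fun S f h hS => h.exists_le _ hψ hqm κ J hJ0 hJm hJb hJX hS) S hS hmax
  refine ⟨S.filter (fun x => x.2 = 0), S.filter (fun x => ¬ x.2 = 0),
    (Multiset.filter_add_not _ _).symm, ?_, ?_, hS.mono (Multiset.filter_le _ _),
    hS.mono (Multiset.filter_le _ _)⟩
  · intro x hx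
    exact (Multiset.mem_filter.1 hx).2
  · intro x hx
    obtain ⟨h1, h2⟩ := Multiset.mem_filter.1 hx
    exact (hno x h1).resolve_left h2
end

section
/- Let p, q, r be distinct primes. Then k(C_p ⊕ C_q ⊕ C_r) = 3 − 1/p − 1/q − 1/r. -/
namespace CrossAux

open Classical in
theorem zsf_replace {G : Type*} [AddCommGroup G] {S T : Multiset G} (hS : IsZeroSumFree S)
    (hT : T ≤ S) (hT0 : T ≠ 0) : IsZeroSumFree (T.sum ::ₘ (S - T)) := by
  intro U hU hU0 hsum
  by_cases hm : T.sum ∈ U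
  · obtain ⟨V, rfl⟩ := Multiset.exists_cons_of_mem hm
    have hV : V ≤ S - T := (Multiset.cons_le_cons_iff _).1 hU
    refine hS (T + V) ?_ ?_ ?_
    · calc T + V ≤ T + (S - T) := by gcongr
        _ = S := add_tsub_cancel_of_le hT
    · intro h
      exact hT0 (by simpa using (add_eq_zero.1 h).1)
    · simpa using hsum
  · have hV : U ≤ S - T := (Multiset.le_cons_of_notMem hm).1 hU
    exact hS U (hV.trans (Multiset.sub_le_self _ _)) hU0 hsum

theorem exists_short {G : Type*} [AddCommGroup G] {n : ℕ} (hn : 0 < n) (φ : G →+ ZMod n)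
    (M : Multiset G) (hM : n ≤ M.card) :
    ∃ T ≤ M, T ≠ 0 ∧ T.card ≤ n ∧ φ T.sum = 0 := by
  have : NeZero n := ⟨hn.ne'⟩
  induction M using Quotient.inductionOn with
  | _ l =>
  have hl : n ≤ l.length := by simpa using hM
  obtain ⟨x, y, hxy, he⟩ := Fintype.exists_ne_map_eq_of_card_lt
    (fun i : Fin (n + 1) => φ (l.take i).sum) (by simp [ZMod.card])
  wlog hlt : x < y generalizing x y
  · exact this y x hxy.symm he.symm (lt_of_le_of_ne (not_lt.1 hlt) hxy.symm)
  have hy : (y : ℕ) ≤ n := by have := y.2; omega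
  have hlt' : (x : ℕ) < y := hlt
  refine ⟨((l.take y).drop x : List G), ?_, ?_, ?_, ?_⟩
  · exact Multiset.coe_le.2 (((List.drop_sublist _ _).trans (List.take_sublist _ _)).subperm)
  · intro h
    have := congrArg Multiset.card h
    simp at this
    omega
  · simp
    omega
  · have h1 : (l.take y).sum = (l.take x).sum + ((l.take y).drop x).sum := by
      conv_lhs => rw [← List.take_append_drop x (l.take y), List.sum_append]
      rw [List.take_take, min_eq_left hlt'.le]
    have h2 : φ (l.take x).sum = φ (l.take y).sum := he
    rw [h1, map_add] at h2
    simpa using h2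

theorem exists_cover {G : Type*} [AddCommGroup G] {p : ℕ} (hp : p.Prime) (f : G →+ ZMod p)
    (M : Multiset G) : (∀ x ∈ M, f x ≠ 0) →
    ∃ A : Finset (ZMod p), min p (M.card + 1) ≤ A.card ∧ ∀ a ∈ A, ∃ T ≤ M, f T.sum = a := by
  have : Fact p.Prime := ⟨hp⟩
  induction M using Multiset.induction_on with
  | empty => intro _; exact ⟨{0}, by simp, by simp⟩
  | cons x M ih =>
    intro h
    obtain ⟨A, hA, hA'⟩ := ih (fun y hy => h y (Multiset.mem_cons_of_mem hy))
    have hx : f x ≠ 0 := h x (Multiset.mem_cons_self _ _)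
    have hAne : A.Nonempty := by
      rw [← Finset.card_pos]
      have := hp.pos
      omega
    open Pointwise in
    have hcd := ZMod.cauchy_davenport hp (s := A) (t := ({0, f x} : Finset (ZMod p))) hAne (by simp)
    have h2 : ({0, f x} : Finset (ZMod p)).card = 2 := Finset.card_pair hx.symm
    open Pointwise in
    refine ⟨A + {0, f x}, ?_, ?_⟩
    · rw [h2] at hcd
      simp only [Multiset.card_cons]
      omega
    · intro a ha
      obtain ⟨b, hb, c, hc, rfl⟩ := Finset.mem_add.1 ha
      obtain ⟨T, hT, rfl⟩ := hA' b hb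
      rcases Finset.mem_insert.1 hc with rfl | hc
      · exact ⟨T, hT.trans (Multiset.le_cons_self _ _), by simp⟩
      · rw [Finset.mem_singleton] at hc
        subst hc
        exact ⟨x ::ₘ T, (Multiset.cons_le_cons_iff _).2 hT, by simp [add_comm]⟩

theorem map_sum_eq_zero {G H : Type*} [AddCommGroup G] [AddCommGroup H] (g : G →+ H)
    (T : Multiset G) (h : ∀ x ∈ T, g x = 0) : g T.sum = 0 := by
  rw [map_multiset_sum]
  apply Multiset.sum_eq_zero
  intro y hy
  obtain ⟨x, hx, rfl⟩ := Multiset.mem_map.1 hy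
  exact h x hx

open Classical in
/-- Elements supported only at `f`. -/
noncomputable def pureF {G H : Type*} [AddCommGroup G] [AddCommGroup H] {p : ℕ}
    (f : G →+ ZMod p) (g : G →+ H) (S : Multiset G) : Multiset G :=
  S.filter (fun x => f x ≠ 0 ∧ g x = 0)

open Classical in
/-- The complement. -/
noncomputable def restF {G H : Type*} [AddCommGroup G] [AddCommGroup H] {p : ℕ}
    (f : G →+ ZMod p) (g : G →+ H) (S : Multiset G) : Multiset G :=
  S.filter (fun x => ¬ (f x ≠ 0 ∧ g x = 0))

theorem pure_add_rest {G H : Type*} [AddCommGroup G] [AddCommGroup H] {p : ℕ}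
    (f : G →+ ZMod p) (g : G →+ H) (S : Multiset G) : pureF f g S + restF f g S = S := by
  classical
  exact Multiset.filter_add_not _ S

theorem card_pure_lt {G H : Type*} [AddCommGroup G] [AddCommGroup H] {p : ℕ} (hp : p.Prime)
    (f : G →+ ZMod p) (g : G →+ H) (hinj : ∀ x, f x = 0 → g x = 0 → x = 0)
    {S : Multiset G} (hS : IsZeroSumFree S) : (pureF f g S).card < p := by
  classical
  by_contra hc
  obtain ⟨T, hT, hT0, -, hf⟩ := exists_short hp.pos f (pureF f g S) (not_lt.1 hc)
  refine hS T (hT.trans (Multiset.filter_le _ _)) hT0 (hinj _ hf ?_)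
  apply map_sum_eq_zero
  intro x hx
  exact (Multiset.mem_filter.1 (Multiset.mem_of_le hT hx)).2.2

theorem exists_le_map {G H : Type*} (g : G → H) (M : Multiset G) :
    ∀ T ≤ M.map g, ∃ T' ≤ M, T'.map g = T := by
  classical
  induction M using Multiset.induction_on with
  | empty => intro T hT; exact ⟨0, le_rfl, by simpa using (hT.antisymm (by simp)).symm⟩
  | cons x M ih =>
    intro T hT
    rw [Multiset.map_cons] at hT
    by_cases hm : g x ∈ T
    · obtain ⟨V, rfl⟩ := Multiset.exists_cons_of_mem hm
      obtain ⟨V', hV', rfl⟩ := ih V ((Multiset.cons_le_cons_iff _).1 hT)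
      exact ⟨x ::ₘ V', (Multiset.cons_le_cons_iff _).2 hV', by simp⟩
    · obtain ⟨V', hV', rfl⟩ := ih T ((Multiset.le_cons_of_notMem hm).1 hT)
      exact ⟨V', hV'.trans (Multiset.le_cons_self _ _), rfl⟩

theorem zsf_rest {G H : Type*} [AddCommGroup G] [AddCommGroup H] {p : ℕ} (hp : p.Prime)
    (f : G →+ ZMod p) (g : G →+ H) (hinj : ∀ x, f x = 0 → g x = 0 → x = 0)
    {S : Multiset G} (hS : IsZeroSumFree S) (hc : p ≤ (pureF f g S).card + 1) :
    IsZeroSumFree ((restF f g S).map g) := by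
  classical
  have : Fact p.Prime := ⟨hp⟩
  intro T hT hT0 hsum
  obtain ⟨T', hT', rfl⟩ := exists_le_map g _ T hT
  obtain ⟨A, hA, hA'⟩ := exists_cover hp f (pureF f g S)
    (fun x hx => (Multiset.mem_filter.1 hx).2.1)
  have hAu : A = Finset.univ := by
    apply Finset.eq_univ_of_card
    have h1 : A.card ≤ Fintype.card (ZMod p) := Finset.card_le_univ A
    rw [ZMod.card] at h1 ⊢
    omega
  obtain ⟨U, hU, hUf⟩ := hA' (- f T'.sum) (by rw [hAu]; exact Finset.mem_univ _)
  refine hS (U + T') ?_ ?_ (hinj _ ?_ ?_)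
  · calc U + T' ≤ pureF f g S + restF f g S := add_le_add hU hT'
      _ = S := pure_add_rest f g S
  · intro h
    exact hT0 (by simp [(add_eq_zero.1 h).2])
  · simp [hUf]
  · have h1 : g U.sum = 0 := by
      apply map_sum_eq_zero
      intro x hx
      exact (Multiset.mem_filter.1 (Multiset.mem_of_le hU hx)).2.2
    have h2 : g T'.sum = 0 := by rw [map_multiset_sum]; exact hsum
    rw [Multiset.sum_add, map_add, h1, h2, add_zero]

/-- weight of a coordinate -/
noncomputable def u (p : ℕ) (a : ZMod p) : ℝ := if a = 0 then 1 else (p : ℝ)⁻¹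

theorem u_le_one {p : ℕ} (a : ZMod p) : u p a ≤ 1 := by
  unfold u
  split_ifs
  · exact le_rfl
  · exact Nat.cast_inv_le_one p

theorem u_nonneg {p : ℕ} (a : ZMod p) : 0 ≤ u p a := by
  unfold u; split_ifs <;> positivity

theorem le_u {p : ℕ} (a : ZMod p) : (p : ℝ)⁻¹ ≤ u p a := by
  unfold u
  split_ifs
  · exact Nat.cast_inv_le_one p
  · exact le_rfl

theorem u_zero {p : ℕ} : u p 0 = 1 := by simp [u]

theorem u_ne {p : ℕ} {a : ZMod p} (h : a ≠ 0) : u p a = (p : ℝ)⁻¹ := by simp [u, h]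

theorem reduce {G : Type*} [AddCommGroup G] {n : ℕ} (hn : 0 < n) (φ : G →+ ZMod n)
    (W : G → ℝ) (P : G → Prop) [DecidablePred P] (c : ℝ) (hc : 0 ≤ c) (hW : ∀ x, P x → W x = c)
    (hφ : ∀ x, P x → φ x ≠ 0)
    (hsum : ∀ T : Multiset G, (∀ x ∈ T, P x) → φ T.sum = 0 → n * c ≤ W T.sum)
    {S : Multiset G} (hS : IsZeroSumFree S) (hcard : n ≤ (S.filter P).card) :
    ∃ S' : Multiset G, IsZeroSumFree S' ∧ S'.card < S.card ∧ (S.map W).sum ≤ (S'.map W).sum := by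
  classical
  obtain ⟨T, hT, hT0, hTc, hf⟩ := exists_short hn φ (S.filter P) hcard
  have hTS : T ≤ S := hT.trans (Multiset.filter_le _ _)
  have hTP : ∀ x ∈ T, P x := fun x hx => (Multiset.mem_filter.1 (Multiset.mem_of_le hT hx)).2
  have hpos : 0 < T.card := Multiset.card_pos.2 hT0
  have h1 : T.card ≠ 1 := by
    intro h
    obtain ⟨x, rfl⟩ := Multiset.card_eq_one.1 h
    exact hφ x (hTP x (by simp)) (by simpa using hf)
  have hSe : S = T + (S - T) := (add_tsub_cancel_of_le hTS).symm
  refine ⟨T.sum ::ₘ (S - T), zsf_replace hS hTS hT0, ?_, ?_⟩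
  · conv_rhs => rw [hSe]
    rw [Multiset.card_cons, Multiset.card_add]
    omega
  · conv_lhs => rw [hSe]
    rw [Multiset.map_add, Multiset.sum_add, Multiset.map_cons, Multiset.sum_cons]
    have h2 : (T.map W).sum = T.card * c := by
      rw [Multiset.map_congr rfl (fun x hx => hW x (hTP x hx))]
      simp
    have h3 : (T.card : ℝ) * c ≤ n * c := by gcongr
    have h4 := hsum T hTP hf
    linarith

theorem sum_ite {G : Type*} (P : G → Prop) [DecidablePred P] (c : ℝ) (S : Multiset G) :
    (S.map (fun x => if P x then c else 0)).sum = (S.filter P).card * c := by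
  induction S using Multiset.induction_on with
  | empty => simp
  | cons x S ih =>
    by_cases h : P x
    · simp [h, ih]; ring
    · simp [h, ih]

theorem one_prime {q : ℕ} (hq : q.Prime) (S : Multiset (ZMod q)) (hS : IsZeroSumFree S) :
    (S.map (u q)).sum ≤ 1 - (q : ℝ)⁻¹ := by
  have h0 : ∀ x ∈ S, x ≠ 0 := by
    intro x hx h
    exact hS {x} (by simpa using hx) (by simp) (by simpa using h)
  rw [Multiset.map_congr rfl (fun x hx => u_ne (h0 x hx))]
  have hc : S.card < q := by
    by_contra hc
    obtain ⟨T, hT, hT0, -, hf⟩ := exists_short hq.pos (AddMonoidHom.id _) S (not_lt.1 hc)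
    exact hS T hT hT0 hf
  have hq0 : (0 : ℝ) < q := by exact_mod_cast hq.pos
  have h1 : (S.card : ℝ) + 1 ≤ q := by exact_mod_cast hc
  simp only [Multiset.map_const', Multiset.sum_replicate, nsmul_eq_mul]
  have h2 : ((S.card : ℝ) + 1) * (q : ℝ)⁻¹ ≤ q * (q : ℝ)⁻¹ := by gcongr
  rw [mul_inv_cancel₀ hq0.ne'] at h2
  linarith

/-- If the pure part at `f` is full, pass to the quotient. -/
theorem proj_bound {G H : Type*} [AddCommGroup G] [AddCommGroup H] {p : ℕ} (hp : p.Prime)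
    (f : G →+ ZMod p) (g : G →+ H) (hinj : ∀ x, f x = 0 → g x = 0 → x = 0)
    (w : H → ℝ) (hw0 : w 0 = 1) (hw : ∀ y, 0 ≤ w y) (B : ℝ)
    (hB : ∀ S : Multiset H, IsZeroSumFree S → (S.map w).sum ≤ B)
    {S : Multiset G} (hS : IsZeroSumFree S) (hc : p ≤ (pureF f g S).card + 1) :
    (S.map (fun x => u p (f x) * w (g x))).sum ≤ (1 - (p : ℝ)⁻¹) + B := by
  classical
  have h1 := hB _ (zsf_rest hp f g hinj hS hc)
  have h2 := card_pure_lt hp f g hinj hS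
  conv_lhs => rw [← pure_add_rest f g S]
  rw [Multiset.map_add, Multiset.sum_add]
  have hq0 : (0 : ℝ) < p := by exact_mod_cast hp.pos
  apply add_le_add
  · have : ∀ x ∈ pureF f g S, u p (f x) * w (g x) = (p : ℝ)⁻¹ := by
      intro x hx
      obtain ⟨ha, hb⟩ := (Multiset.mem_filter.1 hx).2
      rw [u_ne ha, hb, hw0, mul_one]
    rw [Multiset.map_congr rfl this]
    have h1 : ((pureF f g S).card : ℝ) + 1 ≤ p := by exact_mod_cast h2
    simp only [Multiset.map_const', Multiset.sum_replicate, nsmul_eq_mul]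
    have h2 : (((pureF f g S).card : ℝ) + 1) * (p : ℝ)⁻¹ ≤ p * (p : ℝ)⁻¹ := by gcongr
    rw [mul_inv_cancel₀ hq0.ne'] at h2
    linarith
  · refine le_trans ?_ h1
    rw [Multiset.map_map]
    apply Multiset.sum_map_le_sum_map
    intro x _
    have := mul_le_mul_of_nonneg_right (u_le_one (f x)) (hw (g x))
    simpa using this

theorem count_bound {a p : ℕ} (hp : 0 < p) (k : ℕ) (h : a + k ≤ p) :
    (a : ℝ) * (p : ℝ)⁻¹ ≤ 1 - k * (p : ℝ)⁻¹ := by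
  have hq0 : (0 : ℝ) < p := by exact_mod_cast hp
  have h1 : (a : ℝ) + k ≤ p := by exact_mod_cast h
  have h2 : ((a : ℝ) + k) * (p : ℝ)⁻¹ ≤ p * (p : ℝ)⁻¹ := by gcongr
  rw [mul_inv_cancel₀ hq0.ne'] at h2
  linarith

theorem two_primes_lt {p q : ℕ} (hp : p.Prime) (hq : q.Prime) (hlt : p < q)
    {G : Type*} [AddCommGroup G] (f : G →+ ZMod p) (g : G →+ ZMod q)
    (hinj : ∀ x, f x = 0 → g x = 0 → x = 0) :
    ∀ n : ℕ, ∀ S : Multiset G, S.card = n → IsZeroSumFree S →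
      (S.map (fun x => u p (f x) * u q (g x))).sum ≤ 2 - (p : ℝ)⁻¹ - (q : ℝ)⁻¹ := by
  classical
  intro n
  induction n using Nat.strong_induction_on with
  | _ n ih =>
  intro S hSn hS
  have hp0 : (0 : ℝ) < p := by exact_mod_cast hp.pos
  have hq0 : (0 : ℝ) < q := by exact_mod_cast hq.pos
  by_cases hA : p ≤ (pureF f g S).card + 1
  · have := proj_bound hp f g hinj (u q) u_zero u_nonneg _ (one_prime hq) hS hA
    linarith
  by_cases hD : p ≤ (S.filter (fun x => f x ≠ 0 ∧ g x ≠ 0)).card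
  · obtain ⟨S', h1, h2, h3⟩ := reduce hp.pos f (fun x => u p (f x) * u q (g x))
      (fun x => f x ≠ 0 ∧ g x ≠ 0) ((p : ℝ)⁻¹ * (q : ℝ)⁻¹) (by positivity)
      (fun x hx => by simp only [u_ne hx.1, u_ne hx.2]) (fun x hx => hx.1)
      (fun T hT hf => by
        simp only [hf, u_zero, one_mul]
        rw [mul_inv_cancel_left₀ hp0.ne']
        exact le_u _) hS hD
    exact h3.trans (ih _ (hSn ▸ h2) S' rfl h1)
  have hB := card_pure_lt hq g f (fun x h1 h2 => hinj x h2 h1) hS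
  have hx0 : ∀ x ∈ S, x ≠ 0 := by
    intro x hx h
    exact hS {x} (by simpa using hx) (by simp) (by simpa using h)
  have key : (S.map (fun x => u p (f x) * u q (g x))).sum =
      (pureF f g S).card * (p : ℝ)⁻¹ + (pureF g f S).card * (q : ℝ)⁻¹
      + (S.filter (fun x => f x ≠ 0 ∧ g x ≠ 0)).card * ((p : ℝ)⁻¹ * (q : ℝ)⁻¹) := by
    unfold pureF
    rw [← sum_ite, ← sum_ite, ← sum_ite, ← Multiset.sum_map_add, ← Multiset.sum_map_add]
    congr 1
    apply Multiset.map_congr rfl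
    intro x hx
    have := hx0 x hx
    have := hinj x
    by_cases h1 : f x = 0 <;> by_cases h2 : g x = 0 <;> simp_all [u]
  rw [key]
  have e1 := count_bound hp.pos 2 (a := (pureF f g S).card) (by omega)
  have e2 := count_bound hq.pos 1 (a := (pureF g f S).card) (by omega)
  have e3 := count_bound hp.pos 1 (a := (S.filter (fun x => f x ≠ 0 ∧ g x ≠ 0)).card) (by omega)
  have e4 := mul_le_mul_of_nonneg_right e3 (show 0 ≤ (q : ℝ)⁻¹ by positivity)
  have e5 : (q : ℝ)⁻¹ ≤ (p : ℝ)⁻¹ := by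
    apply inv_anti₀ hp0
    exact_mod_cast hlt.le
  have e6 : 0 < (p : ℝ)⁻¹ * (q : ℝ)⁻¹ := by positivity
  push_cast at *
  linarith

theorem two_primes {p q : ℕ} (hp : p.Prime) (hq : q.Prime) (hne : p ≠ q)
    {G : Type*} [AddCommGroup G] (f : G →+ ZMod p) (g : G →+ ZMod q)
    (hinj : ∀ x, f x = 0 → g x = 0 → x = 0) (S : Multiset G) (hS : IsZeroSumFree S) :
    (S.map (fun x => u p (f x) * u q (g x))).sum ≤ 2 - (p : ℝ)⁻¹ - (q : ℝ)⁻¹ := by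
  rcases lt_or_gt_of_ne hne with h | h
  · exact two_primes_lt hp hq h f g hinj _ S rfl hS
  · have := two_primes_lt hq hp h g f (fun x h1 h2 => hinj x h2 h1) _ S rfl hS
    simp only [mul_comm (u q _)] at this
    linarith

theorem proj3 {p q r : ℕ} (hp : p.Prime) (hq : q.Prime) (hr : r.Prime) (hqr : q ≠ r)
    {G : Type*} [AddCommGroup G] (f : G →+ ZMod p) (g : G →+ ZMod q) (h : G →+ ZMod r)
    (hinj : ∀ x, f x = 0 → g x = 0 → h x = 0 → x = 0) (S : Multiset G) (hS : IsZeroSumFree S)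
    (hA : p ≤ (pureF f (g.prod h) S).card + 1) :
    (S.map (fun x => u p (f x) * (u q (g x) * u r (h x)))).sum
      ≤ 3 - (p : ℝ)⁻¹ - (q : ℝ)⁻¹ - (r : ℝ)⁻¹ := by
  have := proj_bound hp f (g.prod h)
    (fun x h1 h2 => hinj x h1 (by simpa using congrArg Prod.fst h2)
      (by simpa using congrArg Prod.snd h2))
    (fun y => u q y.1 * u r y.2) (by simp [u_zero])
    (fun y => mul_nonneg (u_nonneg _) (u_nonneg _)) _
    (two_primes hq hr hqr (AddMonoidHom.fst (ZMod q) (ZMod r)) (AddMonoidHom.snd (ZMod q) (ZMod r))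
      (fun x h1 h2 => Prod.ext h1 h2)) hS hA
  simp only [AddMonoidHom.prod_apply] at this
  linarith

set_option maxHeartbeats 1000000 in
theorem three_lt {p q r : ℕ} (hp : p.Prime) (hq : q.Prime) (hr : r.Prime) (hpq : p < q)
    (hqr : q < r)
    {G : Type*} [AddCommGroup G] (f : G →+ ZMod p) (g : G →+ ZMod q) (h : G →+ ZMod r)
    (hinj : ∀ x, f x = 0 → g x = 0 → h x = 0 → x = 0) :
    ∀ n : ℕ, ∀ S : Multiset G, S.card = n → IsZeroSumFree S →
    (S.map (fun x => u p (f x) * (u q (g x) * u r (h x)))).sum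
      ≤ 3 - (p : ℝ)⁻¹ - (q : ℝ)⁻¹ - (r : ℝ)⁻¹ := by
  classical
  intro n
  induction n using Nat.strong_induction_on with
  | _ n ih =>
  intro S hSn hS
  have hp0 : (0 : ℝ) < p := by exact_mod_cast hp.pos
  have hq0 : (0 : ℝ) < q := by exact_mod_cast hq.pos
  have hr0 : (0 : ℝ) < r := by exact_mod_cast hr.pos
  by_cases hA : p ≤ (pureF f (g.prod h) S).card + 1
  · exact proj3 hp hq hr hqr.ne f g h hinj S hS hA
  by_cases hB : q ≤ (pureF g (f.prod h) S).card + 1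
  · have := proj3 hq hp hr (hpq.trans hqr).ne g f h (fun x h1 h2 h3 => hinj x h2 h1 h3) S hS hB
    simp only [mul_left_comm (u q _)] at this
    linarith
  by_cases hC : r ≤ (pureF h (f.prod g) S).card + 1
  · have := proj3 hr hp hq hpq.ne h f g (fun x h1 h2 h3 => hinj x h2 h3 h1) S hS hC
    have e : ∀ x, u r (h x) * (u p (f x) * u q (g x)) = u p (f x) * (u q (g x) * u r (h x)) := by
      intro x; ring
    simp only [e] at this
    linarith
  by_cases hD : p ≤ (S.filter (fun x => f x ≠ 0 ∧ g x ≠ 0 ∧ h x = 0)).card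
  · obtain ⟨S', h1, h2, h3⟩ := reduce hp.pos f (fun x => u p (f x) * (u q (g x) * u r (h x)))
      (fun x => f x ≠ 0 ∧ g x ≠ 0 ∧ h x = 0) ((p : ℝ)⁻¹ * (q : ℝ)⁻¹) (by positivity)
      (fun x hx => by simp only [u_ne hx.1, u_ne hx.2.1, hx.2.2, u_zero, mul_one])
      (fun x hx => hx.1)
      (fun T hT hf => by
        simp only [hf, map_sum_eq_zero h T (fun x hx => (hT x hx).2.2), u_zero, one_mul, mul_one]
        rw [mul_inv_cancel_left₀ hp0.ne']
        exact le_u _) hS hD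
    exact h3.trans (ih _ (hSn ▸ h2) S' rfl h1)
  by_cases hE : p ≤ (S.filter (fun x => f x ≠ 0 ∧ g x = 0 ∧ h x ≠ 0)).card
  · obtain ⟨S', h1, h2, h3⟩ := reduce hp.pos f (fun x => u p (f x) * (u q (g x) * u r (h x)))
      (fun x => f x ≠ 0 ∧ g x = 0 ∧ h x ≠ 0) ((p : ℝ)⁻¹ * (r : ℝ)⁻¹) (by positivity)
      (fun x hx => by simp only [u_ne hx.1, u_ne hx.2.2, hx.2.1, u_zero, one_mul])
      (fun x hx => hx.1)
      (fun T hT hf => by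
        simp only [hf, map_sum_eq_zero g T (fun x hx => (hT x hx).2.1), u_zero, one_mul, mul_one]
        rw [mul_inv_cancel_left₀ hp0.ne']
        exact le_u _) hS hE
    exact h3.trans (ih _ (hSn ▸ h2) S' rfl h1)
  by_cases hF : q ≤ (S.filter (fun x => f x = 0 ∧ g x ≠ 0 ∧ h x ≠ 0)).card
  · obtain ⟨S', h1, h2, h3⟩ := reduce hq.pos g (fun x => u p (f x) * (u q (g x) * u r (h x)))
      (fun x => f x = 0 ∧ g x ≠ 0 ∧ h x ≠ 0) ((q : ℝ)⁻¹ * (r : ℝ)⁻¹) (by positivity)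
      (fun x hx => by simp only [u_ne hx.2.1, u_ne hx.2.2, hx.1, u_zero, one_mul])
      (fun x hx => hx.2.1)
      (fun T hT hf => by
        simp only [hf, map_sum_eq_zero f T (fun x hx => (hT x hx).1), u_zero, one_mul, mul_one]
        rw [mul_inv_cancel_left₀ hq0.ne']
        exact le_u _) hS hF
    exact h3.trans (ih _ (hSn ▸ h2) S' rfl h1)
  by_cases hH : p ≤ (S.filter (fun x => f x ≠ 0 ∧ g x ≠ 0 ∧ h x ≠ 0)).card
  · obtain ⟨S', h1, h2, h3⟩ := reduce hp.pos f (fun x => u p (f x) * (u q (g x) * u r (h x)))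
      (fun x => f x ≠ 0 ∧ g x ≠ 0 ∧ h x ≠ 0) ((p : ℝ)⁻¹ * ((q : ℝ)⁻¹ * (r : ℝ)⁻¹))
      (by positivity)
      (fun x hx => by simp only [u_ne hx.1, u_ne hx.2.1, u_ne hx.2.2])
      (fun x hx => hx.1)
      (fun T hT hf => by
        simp only [hf, u_zero, one_mul]
        rw [mul_inv_cancel_left₀ hp0.ne']
        exact mul_le_mul (le_u _) (le_u _) (by positivity) (u_nonneg _)) hS hH
    exact h3.trans (ih _ (hSn ▸ h2) S' rfl h1)
  have hx0 : ∀ x ∈ S, x ≠ 0 := by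
    intro x hx h
    exact hS {x} (by simpa using hx) (by simp) (by simpa using h)
  have key : (S.map (fun x => u p (f x) * (u q (g x) * u r (h x)))).sum =
      (pureF f (g.prod h) S).card * (p : ℝ)⁻¹ + (pureF g (f.prod h) S).card * (q : ℝ)⁻¹
      + (pureF h (f.prod g) S).card * (r : ℝ)⁻¹
      + (S.filter (fun x => f x ≠ 0 ∧ g x ≠ 0 ∧ h x = 0)).card * ((p : ℝ)⁻¹ * (q : ℝ)⁻¹)
      + (S.filter (fun x => f x ≠ 0 ∧ g x = 0 ∧ h x ≠ 0)).card * ((p : ℝ)⁻¹ * (r : ℝ)⁻¹)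
      + (S.filter (fun x => f x = 0 ∧ g x ≠ 0 ∧ h x ≠ 0)).card * ((q : ℝ)⁻¹ * (r : ℝ)⁻¹)
      + (S.filter (fun x => f x ≠ 0 ∧ g x ≠ 0 ∧ h x ≠ 0)).card
          * ((p : ℝ)⁻¹ * ((q : ℝ)⁻¹ * (r : ℝ)⁻¹)) := by
    unfold pureF
    simp only [← sum_ite, ← Multiset.sum_map_add]
    congr 1
    apply Multiset.map_congr rfl
    intro x hx
    have hne : ¬ (f x = 0 ∧ g x = 0 ∧ h x = 0) :=
      fun hh => hx0 x hx (hinj x hh.1 hh.2.1 hh.2.2)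
    clear ih hA hB hC hD hE hF hH hx0 hinj
    by_cases h1 : f x = 0 <;> by_cases h2 : g x = 0 <;> by_cases h3 : h x = 0 <;>
      simp [u, h1, h2, h3] at hne ⊢
  rw [key]
  have e1 := count_bound hp.pos 2 (a := (pureF f (g.prod h) S).card) (by omega)
  have e2 := count_bound hq.pos 2 (a := (pureF g (f.prod h) S).card) (by omega)
  have e3 := count_bound hr.pos 2 (a := (pureF h (f.prod g) S).card) (by omega)
  have d1 := mul_le_mul_of_nonneg_right (count_bound hp.pos 1 (Nat.succ_le_of_lt (not_le.1 hD)))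
    (show 0 ≤ (q : ℝ)⁻¹ by positivity)
  have d2 := mul_le_mul_of_nonneg_right (count_bound hp.pos 1 (Nat.succ_le_of_lt (not_le.1 hE)))
    (show 0 ≤ (r : ℝ)⁻¹ by positivity)
  have d3 := mul_le_mul_of_nonneg_right (count_bound hq.pos 1 (Nat.succ_le_of_lt (not_le.1 hF)))
    (show 0 ≤ (r : ℝ)⁻¹ by positivity)
  have d4 := mul_le_mul_of_nonneg_right (count_bound hp.pos 1 (Nat.succ_le_of_lt (not_le.1 hH)))
    (show 0 ≤ (q : ℝ)⁻¹ * (r : ℝ)⁻¹ by positivity)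
  have e5 : (r : ℝ)⁻¹ ≤ (p : ℝ)⁻¹ := by
    apply inv_anti₀ hp0
    exact_mod_cast (hpq.trans hqr).le
  have e6 : 0 < (p : ℝ)⁻¹ * (q : ℝ)⁻¹ := by positivity
  have e7 : 0 < (p : ℝ)⁻¹ * (r : ℝ)⁻¹ := by positivity
  have e8 : 0 < (p : ℝ)⁻¹ * ((q : ℝ)⁻¹ * (r : ℝ)⁻¹) := by positivity
  push_cast at *
  linarith

theorem three {p q r : ℕ} (hp : p.Prime) (hq : q.Prime) (hr : r.Prime) (hpq : p ≠ q)
    (hpr : p ≠ r) (hqr : q ≠ r)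
    {G : Type*} [AddCommGroup G] (f : G →+ ZMod p) (g : G →+ ZMod q) (h : G →+ ZMod r)
    (hinj : ∀ x, f x = 0 → g x = 0 → h x = 0 → x = 0) (S : Multiset G) (hS : IsZeroSumFree S) :
    (S.map (fun x => u p (f x) * (u q (g x) * u r (h x)))).sum
      ≤ 3 - (p : ℝ)⁻¹ - (q : ℝ)⁻¹ - (r : ℝ)⁻¹ := by
  have fin : ∀ {F : G → ℝ} {b : ℝ}, (S.map F).sum ≤ b →
      (∀ x, u p (f x) * (u q (g x) * u r (h x)) = F x) →
      b = 3 - (p : ℝ)⁻¹ - (q : ℝ)⁻¹ - (r : ℝ)⁻¹ →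
      (S.map (fun x => u p (f x) * (u q (g x) * u r (h x)))).sum
        ≤ 3 - (p : ℝ)⁻¹ - (q : ℝ)⁻¹ - (r : ℝ)⁻¹ := by
    intro F b h1 h2 h3
    simp only [h2]
    exact h3 ▸ h1
  rcases lt_or_gt_of_ne hpq with h1 | h1 <;> rcases lt_or_gt_of_ne hpr with h2 | h2 <;>
    rcases lt_or_gt_of_ne hqr with h3 | h3
  · exact three_lt hp hq hr h1 h3 f g h hinj _ S rfl hS
  · exact fin (three_lt hp hr hq h2 h3 f h g (fun x a b c => hinj x a c b) _ S rfl hS)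
      (fun x => by ring) (by ring)
  · omega
  · exact fin (three_lt hr hp hq h2 h1 h f g (fun x a b c => hinj x b c a) _ S rfl hS)
      (fun x => by ring) (by ring)
  · exact fin (three_lt hq hp hr h1 h2 g f h (fun x a b c => hinj x b a c) _ S rfl hS)
      (fun x => by ring) (by ring)
  · omega
  · exact fin (three_lt hq hr hp h3 h2 g h f (fun x a b c => hinj x c a b) _ S rfl hS)
      (fun x => by ring) (by ring)
  · exact fin (three_lt hr hq hp h3 h1 h g f (fun x a b c => hinj x c b a) _ S rfl hS)
      (fun x => by ring) (by ring)

theorem u_order {p : ℕ} (hp : p.Prime) (a : ZMod p) : ((addOrderOf a : ℕ) : ℝ)⁻¹ = u p a := by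
  have : Fact p.Prime := ⟨hp⟩
  by_cases h : a = 0
  · subst h; simp [u]
  · have h1 : addOrderOf a = p := addOrderOf_eq_prime (by simp) h
    rw [h1, u_ne h]

theorem order_dvd {p : ℕ} (a : ZMod p) : addOrderOf a ∣ p :=
  addOrderOf_dvd_of_nsmul_eq_zero (by simp)

theorem order_weight {p q r : ℕ} (hp : p.Prime) (hq : q.Prime) (hr : r.Prime) (hpq : p ≠ q)
    (hpr : p ≠ r) (hqr : q ≠ r) (x : ZMod p × ZMod q × ZMod r) :
    ((addOrderOf x : ℕ) : ℝ)⁻¹ = u p x.1 * (u q x.2.1 * u r x.2.2) := by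
  have c1 : Nat.Coprime p q := (Nat.coprime_primes hp hq).2 hpq
  have c2 : Nat.Coprime p r := (Nat.coprime_primes hp hr).2 hpr
  have c3 : Nat.Coprime q r := (Nat.coprime_primes hq hr).2 hqr
  have d1 := order_dvd x.1
  have d2 := order_dvd x.2.1
  have d3 := order_dvd x.2.2
  have k3 : Nat.Coprime (addOrderOf x.2.1) (addOrderOf x.2.2) :=
    Nat.Coprime.of_dvd d2 d3 c3
  have k1 : Nat.Coprime (addOrderOf x.1) (addOrderOf x.2.1 * addOrderOf x.2.2) :=
    Nat.Coprime.of_dvd d1 (mul_dvd_mul d2 d3) (Nat.Coprime.mul_right c1 c2)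
  rw [Prod.addOrderOf, Prod.addOrderOf, k3.lcm_eq_mul, k1.lcm_eq_mul]
  push_cast
  rw [mul_inv, mul_inv, u_order hp, u_order hq, u_order hr]

theorem crossNum_eq {p q r : ℕ} (hp : p.Prime) (hq : q.Prime) (hr : r.Prime) (hpq : p ≠ q)
    (hpr : p ≠ r) (hqr : q ≠ r) (S : Multiset (ZMod p × ZMod q × ZMod r)) :
    crossNum S = (S.map (fun x => u p x.1 * (u q x.2.1 * u r x.2.2))).sum := by
  unfold crossNum
  simp only [order_weight hp hq hr hpq hpr hqr]

theorem nsmul_zero_of_lt {p n : ℕ} (hp : p.Prime) (hn : n ≤ p - 1)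
    (h : (n : ZMod p) = 0) : n = 0 := by
  have := (ZMod.natCast_eq_zero_iff n p).1 h
  have h2 := hp.pos
  exact Nat.eq_zero_of_dvd_of_lt this (by omega)

theorem le_add_split {α : Type*} (T A B : Multiset α) (h : T ≤ A + B) :
    ∃ T1 ≤ A, ∃ T2 ≤ B, T = T1 + T2 := by
  classical
  refine ⟨T ∩ A, Multiset.inter_le_right, T - A, ?_, ?_⟩
  · rw [Multiset.sub_le_iff_le_add, add_comm]; exact h
  · ext a
    simp only [Multiset.count_add, Multiset.count_inter, Multiset.count_sub]
    omega

theorem example_zsf {p q r : ℕ} (hp : p.Prime) (hq : q.Prime) (hr : r.Prime) :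
    IsZeroSumFree (Multiset.replicate (p - 1) ((1, 0, 0) : ZMod p × ZMod q × ZMod r)
      + (Multiset.replicate (q - 1) (0, 1, 0) + Multiset.replicate (r - 1) (0, 0, 1))) := by
  intro T hT hT0 hs
  obtain ⟨T1, h1, T', h', rfl⟩ := le_add_split _ _ _ hT
  obtain ⟨T2, h2, T3, h3, rfl⟩ := le_add_split _ _ _ h'
  obtain ⟨a, ha, rfl⟩ := Multiset.le_replicate_iff.1 h1
  obtain ⟨b, hb, rfl⟩ := Multiset.le_replicate_iff.1 h2
  obtain ⟨c, hc, rfl⟩ := Multiset.le_replicate_iff.1 h3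
  simp [Prod.ext_iff] at hs
  obtain ⟨sa, sb, sc⟩ := hs
  apply hT0
  rw [nsmul_zero_of_lt hp ha sa, nsmul_zero_of_lt hq hb sb, nsmul_zero_of_lt hr hc sc]
  simp

theorem pred_mul_inv {p : ℕ} (hp : p.Prime) :
    ((p - 1 : ℕ) : ℝ) * (p : ℝ)⁻¹ = 1 - (p : ℝ)⁻¹ := by
  have hp0 : (p : ℝ) ≠ 0 := by exact_mod_cast hp.ne_zero
  rw [Nat.cast_sub hp.one_le, sub_mul, mul_inv_cancel₀ hp0]
  simp

end CrossAux

open CrossAux in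
/-- For distinct primes `p, q, r`: `k(C_p ⊕ C_q ⊕ C_r) = 3 - 1/p - 1/q - 1/r`. -/
theorem littleK_zmod_prod_three_primes
    (p q r : ℕ) (hp : p.Prime) (hq : q.Prime) (hr : r.Prime)
    (hpq : p ≠ q) (hpr : p ≠ r) (hqr : q ≠ r) :
    littleK (ZMod p × ZMod q × ZMod r)
      = 3 - (p : ℝ)⁻¹ - (q : ℝ)⁻¹ - (r : ℝ)⁻¹ := by
  have : Fact p.Prime := ⟨hp⟩
  have : Fact q.Prime := ⟨hq⟩
  have : Fact r.Prime := ⟨hr⟩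
  unfold littleK
  refine IsGreatest.csSup_eq ⟨⟨_, example_zsf hp hq hr, ?_⟩, ?_⟩
  · rw [crossNum_eq hp hq hr hpq hpr hqr]
    simp only [Multiset.map_add, Multiset.sum_add, Multiset.map_replicate, Multiset.sum_replicate,
      nsmul_eq_mul, u_zero, u_ne (one_ne_zero' (ZMod p)), u_ne (one_ne_zero' (ZMod q)),
      u_ne (one_ne_zero' (ZMod r)), mul_one, one_mul, pred_mul_inv hp, pred_mul_inv hq,
      pred_mul_inv hr]
    ring
  · rintro x ⟨S, hS, rfl⟩
    rw [crossNum_eq hp hq hr hpq hpr hqr]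
    exact three hp hq hr hpq hpr hqr (AddMonoidHom.fst (ZMod p) (ZMod q × ZMod r))
      ((AddMonoidHom.fst (ZMod q) (ZMod r)).comp (AddMonoidHom.snd (ZMod p) (ZMod q × ZMod r)))
      ((AddMonoidHom.snd (ZMod q) (ZMod r)).comp (AddMonoidHom.snd (ZMod p) (ZMod q × ZMod r)))
      (fun x h1 h2 h3 => Prod.ext h1 (Prod.ext h2 h3)) S hS
end
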